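/- arXiv:2603.29596 — 8 statements merged into one kernel-verified Lean document; each statement's English description precedes it below -/
import Mathlib

section
/- Let γ(t) = (cos t + t sin t, −(sin t − t cos t)) be the reflected unit involute, and let t₀ and θ be real numbers with 0 < θ and t₁ = t₀ − θ > 0, t₂ = t₀ + θ. Then the half-length c of the chord from γ(t₁) to γ(t₂) satisfies c² = ((x(t₂) − x(t₁))/2)² + ((y(t₂) − y(t₁))/2)² = (θ cos θ − sin θ)² + t₀² sin² θ. -/
open Real

/-- For the reflected unit involute `γ(t) = (cos t + t sin t, −(sin t − t cos t))` and
parameters `t₁ = t₀ − θ > 0`, `t₂ = t₀ + θ` with `θ > 0`, the half-length `c` of the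
chord from `γ(t₁)` to `γ(t₂)` satisfies
`c² = ((x(t₂)−x(t₁))/2)² + ((y(t₂)−y(t₁))/2)² = (θ cos θ − sin θ)² + t₀² sin² θ`. -/
theorem involute_chord_halfLength_sq
    (x y : ℝ → ℝ)
    (hx : x = fun t => Real.cos t + t * Real.sin t)
    (hy : y = fun t => -(Real.sin t - t * Real.cos t))
    (t₀ θ t₁ t₂ : ℝ) (hθ : 0 < θ) (ht₁ : t₁ = t₀ - θ) (ht₁pos : 0 < t₁)
    (ht₂ : t₂ = t₀ + θ) :
    ((x t₂ - x t₁) / 2) ^ 2 + ((y t₂ - y t₁) / 2) ^ 2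
      = (θ * Real.cos θ - Real.sin θ) ^ 2 + t₀ ^ 2 * Real.sin θ ^ 2 := by
  subst hx hy ht₁ ht₂
  -- The half-chord is the vector `(t₀ sin θ, θ cos θ - sin θ)` rotated by the angle `-t₀`
  -- (first coordinate along `(cos t₀, -sin t₀)`, second along `(sin t₀, cos t₀)`).
  simp only [Real.sin_add, Real.cos_add, Real.sin_sub, Real.cos_sub]
  linear_combination
    ((θ * Real.cos θ - Real.sin θ) ^ 2 + t₀ ^ 2 * Real.sin θ ^ 2) * Real.sin_sq_add_cos_sq t₀
end

section
/- Let t₀ > θ > 0, set t₁ = t₀ − θ > 0, t₂ = t₀ + θ, let c = √((θ cos θ − sin θ)² + t₀² sin² θ), assume c > 0, and let μ be any real number with c cos μ = θ sin t₀ cos θ + (t₀ cos t₀ − sin t₀) sin θ and c sin μ = θ cos t₀ cos θ − (t₀ sin t₀ + cos t₀) sin θ. Define the boundary data of the involute arc: α = −t₁ − μ, β = −t₂ − μ, k₁ = −1/t₁, k₂ = −1/t₂. Then the inversive invariant Q = (k₁ c + sin α)(k₂ c − sin β) + sin²((α + β)/2) evaluates to Q = (θ² − sin² θ)/(θ² −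 t₀²). In particular, Q < 0 whenever sin θ ≠ ±θ, i.e. for all θ > 0. -/
open Real

/-!
Put `φ = t₀ + μ`, the negative of the slope at the middle parameter relative to the chord, so that
`α = θ - φ`, `β = -θ - φ` and `(α + β) / 2 = -φ`. Rotating the two equations for `μ` by `t₀`
gives `c cos φ = t₀ sin θ` and `c sin φ = θ cos θ - sin θ`, while
`c² = (θ cos θ - sin θ)² + t₀² sin² θ` by definition. Since
`sin (θ - φ) sin (θ + φ) + sin² φ = sin² θ`, expanding `Q` leaves only the products `c²`,
`c sin (θ ± φ)`, all polynomial in `θ, t₀, sin θ, cos θ`, and the formula is an identity modulo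
`sin² θ + cos² θ = 1`. The sign follows from `|sin θ| < θ < t₀`.
-/

/-- For the arc `t ∈ [t₁, t₂]` of the reflected unit involute, with chord half-length
`c`, chord slope `μ`, boundary tangent angles `α = −t₁ − μ`, `β = −t₂ − μ` and boundary
curvatures `k₁ = −1/t₁`, `k₂ = −1/t₂`, the inversive invariant
`Q = (k₁ c + sin α)(k₂ c − sin β) + sin²((α+β)/2)` equals
`(θ² − sin² θ)/(θ² − t₀²)`; in particular `Q < 0`. -/
theorem involute_invariant_Q
    (t₀ θ t₁ t₂ c μ α β k₁ k₂ Q : ℝ)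
    (hθ : 0 < θ) (hθt₀ : θ < t₀)
    (ht₁ : t₁ = t₀ - θ) (ht₁pos : 0 < t₁) (ht₂ : t₂ = t₀ + θ)
    (hc : c = Real.sqrt ((θ * Real.cos θ - Real.sin θ) ^ 2
              + t₀ ^ 2 * Real.sin θ ^ 2))
    (hcpos : 0 < c)
    (hμ₁ : c * Real.cos μ = θ * Real.sin t₀ * Real.cos θ
            + (t₀ * Real.cos t₀ - Real.sin t₀) * Real.sin θ)
    (hμ₂ : c * Real.sin μ = θ * Real.cos t₀ * Real.cos θ
            - (t₀ * Real.sin t₀ + Real.cos t₀) * Real.sin θ)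
    (hα : α = -t₁ - μ) (hβ : β = -t₂ - μ)
    (hk₁ : k₁ = -1 / t₁) (hk₂ : k₂ = -1 / t₂)
    (hQ : Q = (k₁ * c + Real.sin α) * (k₂ * c - Real.sin β)
            + Real.sin ((α + β) / 2) ^ 2) :
    Q = (θ ^ 2 - Real.sin θ ^ 2) / (θ ^ 2 - t₀ ^ 2) ∧ Q < 0 := by
  have hφc : c * cos (t₀ + μ) = t₀ * sin θ := by
    rw [cos_add]
    linear_combination cos t₀ * hμ₁ - sin t₀ * hμ₂ + t₀ * sin θ * sin_sq_add_cos_sq t₀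
  have hφs : c * sin (t₀ + μ) = θ * cos θ - sin θ := by
    rw [sin_add]
    linear_combination sin t₀ * hμ₁ + cos t₀ * hμ₂
      + (θ * cos θ - sin θ) * sin_sq_add_cos_sq t₀
  have hα' : α = θ - (t₀ + μ) := by rw [hα, ht₁]; ring
  have hβ' : β = -(θ + (t₀ + μ)) := by rw [hβ, ht₂]; ring
  have hm : (α + β) / 2 = -(t₀ + μ) := by rw [hα', hβ']; ring
  rw [hm, hα', hβ', sin_neg, sin_neg, sin_sub, sin_add θ] at hQ
  generalize t₀ + μ = φ at *
  have hφ := sin_sq_add_cos_sq φ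
  have hθ1 := sin_sq_add_cos_sq θ
  have hc2 : c ^ 2 = (θ * cos θ - sin θ) ^ 2 + t₀ ^ 2 * sin θ ^ 2 := by
    rw [hc, sq_sqrt (by positivity)]
  have h1 : t₀ - θ ≠ 0 := by linarith
  have h2 : t₀ + θ ≠ 0 := by linarith
  have h3 : θ ^ 2 - t₀ ^ 2 < 0 := by nlinarith
  have hprod : (sin θ * cos φ - cos θ * sin φ) * (sin θ * cos φ + cos θ * sin φ) + sin φ ^ 2
      = sin θ ^ 2 := by
    linear_combination sin θ ^ 2 * hφ - sin φ ^ 2 * hθ1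
  have hexp : Q = (c ^ 2 - 2 * t₀ * sin θ * (c * cos φ) - 2 * θ * cos θ * (c * sin φ))
      / ((t₀ - θ) * (t₀ + θ)) + sin θ ^ 2 := by
    rw [hQ, hk₁, hk₂, ht₁, ht₂, ← hprod]
    field_simp
    ring
  have hval : Q = (θ ^ 2 - sin θ ^ 2) / (θ ^ 2 - t₀ ^ 2) := by
    rw [hexp, hφc, hφs, hc2, eq_div_iff h3.ne]
    field_simp
    linear_combination (θ ^ 2 * (t₀ ^ 2 - θ ^ 2)) * hθ1
  refine ⟨hval, ?_⟩
  rw [hval]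
  refine div_neg_of_pos_of_neg ?_ h3
  linarith [sin_sq_lt_sq hθ.ne']
end

section
/- Fix Q < 0 and set t₀(θ) = √((θ²(1 − Q) − sin² θ)/(−Q)) for θ > 0. Define N(θ) = sin θ · (t₀(θ) cos θ − θ cos θ + sin θ) and D(θ) = t₀(θ) sin² θ + cos θ · (θ cos θ − sin θ). Then the ratio N(θ)/D(θ) tends to +∞ as θ → 0⁺; more precisely, θ · N(θ)/D(θ) → 3/2 as θ → 0⁺. Consequently arctan(N(θ)/D(θ)) → π/2 as θ → 0⁺. -/
open Real Filter

/-!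
Divide out the leading powers of `θ`. As `θ → 0⁺` one has `sin θ / θ → 1`, hence
`t₀(θ) / θ = √((1 - Q - (sin θ / θ)²) / (-Q)) → 1`, and Taylor expansion gives
`(θ cos θ - sin θ) / θ³ → -1/3`. Therefore `N(θ) / θ² → 1` and `D(θ) / θ³ → 1 - 1/3 = 2/3`,
so `θ N(θ) / D(θ) → 3/2`. Multiplying by `θ⁻¹ → +∞` gives `N / D → +∞`, and the arctangent
limit follows.
-/

/-- The third-order term: the Taylor bounds for `sin` and `cos` place the quotient within `θ`
of its limit. -/
lemma tendsto_mul_cos_sub_sin_div_cube :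
    Tendsto (fun θ : ℝ => (θ * cos θ - sin θ) / θ ^ 3) (nhdsWithin 0 (Set.Ioi 0))
      (nhds (-1 / 3)) := by
  rw [tendsto_iff_dist_tendsto_zero]
  have hid : Tendsto (fun θ : ℝ => θ) (nhdsWithin 0 (Set.Ioi 0)) (nhds 0) :=
    nhdsWithin_le_nhds
  refine squeeze_zero' (Eventually.of_forall fun _ => dist_nonneg) ?_ hid
  filter_upwards [Ioc_mem_nhdsGT (zero_lt_one' ℝ)] with θ hθ
  obtain ⟨h0, h1⟩ := hθ
  have habs : |θ| = θ := abs_of_pos h0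
  have hsin := sin_bound (habs.trans_le h1)
  have hcos := cos_bound (habs.trans_le h1)
  rw [habs] at hsin hcos
  rw [Real.dist_eq, show (θ * cos θ - sin θ) / θ ^ 3 - -1 / 3
      = (θ * (cos θ - (1 - θ ^ 2 / 2)) - (sin θ - (θ - θ ^ 3 / 6))) / θ ^ 3 by
    field_simp; ring, abs_div, abs_of_pos (pow_pos h0 3), div_le_iff₀ (pow_pos h0 3)]
  refine (abs_sub _ _).trans ?_
  rw [abs_mul, habs]
  have h4 : 0 < θ ^ 4 := pow_pos h0 4
  nlinarith [mul_le_mul_of_nonneg_left hcos h0.le, mul_le_mul_of_nonneg_left h1 h4.le]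

/-- For fixed `Q < 0`, with `t₀(θ) = √((θ²(1 − Q) − sin² θ)/(−Q))`,
`N(θ) = sin θ (t₀(θ) cos θ − θ cos θ + sin θ)` and
`D(θ) = t₀(θ) sin² θ + cos θ (θ cos θ − sin θ)`, the ratio `N/D` tends to `+∞` as
`θ → 0⁺`; more precisely `θ·N(θ)/D(θ) → 3/2`, and hence
`arctan(N(θ)/D(θ)) → π/2` as `θ → 0⁺`. -/
theorem involute_ND_limit (Q : ℝ) (hQ : Q < 0)
    (t₀ N D : ℝ → ℝ)
    (ht₀ : t₀ = fun θ =>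
      Real.sqrt ((θ ^ 2 * (1 - Q) - Real.sin θ ^ 2) / (-Q)))
    (hN : N = fun θ =>
      Real.sin θ * (t₀ θ * Real.cos θ - θ * Real.cos θ + Real.sin θ))
    (hD : D = fun θ =>
      t₀ θ * Real.sin θ ^ 2 + Real.cos θ * (θ * Real.cos θ - Real.sin θ)) :
    Tendsto (fun θ => N θ / D θ) (nhdsWithin 0 (Set.Ioi 0)) atTop ∧
    Tendsto (fun θ => θ * (N θ / D θ)) (nhdsWithin 0 (Set.Ioi 0))
      (nhds (3 / 2)) ∧
    Tendsto (fun θ => Real.arctan (N θ / D θ)) (nhdsWithin 0 (Set.Ioi 0))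
      (nhds (π / 2)) := by
  subst ht₀ hN hD
  have hpos : ∀ᶠ θ : ℝ in nhdsWithin 0 (Set.Ioi 0), 0 < θ := self_mem_nhdsWithin
  have hs : Tendsto (fun θ : ℝ => sin θ / θ) (nhdsWithin 0 (Set.Ioi 0)) (nhds 1) := by
    have h : Tendsto sinc (nhdsWithin 0 (Set.Ioi 0)) (nhds 1) := by
      simpa using (continuous_sinc.tendsto 0).mono_left nhdsWithin_le_nhds
    refine h.congr' ?_
    filter_upwards [hpos] with θ hθ
    exact sinc_of_ne_zero hθ.ne'
  have hc : Tendsto cos (nhdsWithin 0 (Set.Ioi 0)) (nhds 1) := by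
    simpa using (continuous_cos.tendsto 0).mono_left nhdsWithin_le_nhds
  have ht : Tendsto (fun θ : ℝ => √((θ ^ 2 * (1 - Q) - sin θ ^ 2) / (-Q)) / θ)
      (nhdsWithin 0 (Set.Ioi 0)) (nhds 1) := by
    have h := (((hs.pow 2).const_sub (1 - Q)).div_const (-Q)).sqrt
    have hlim : √((1 - Q - 1 ^ 2) / (-Q)) = 1 := by
      rw [show (1 - Q - 1 ^ 2) / (-Q) = 1 by field_simp [hQ.ne]; ring, sqrt_one]
    rw [hlim] at h
    refine h.congr' ?_
    filter_upwards [hpos] with θ hθ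
    have hdiv := sqrt_div' ((θ ^ 2 * (1 - Q) - sin θ ^ 2) / (-Q)) (sq_nonneg θ)
    rw [sqrt_sq hθ.le] at hdiv
    rw [← hdiv]
    congr 1
    have := hQ.ne
    field_simp
  have hk := tendsto_mul_cos_sub_sin_div_cube
  -- `N / θ² → 1` and `D / θ³ → 1 - 1/3`
  have hmain : Tendsto (fun θ : ℝ => θ *
      (sin θ * (√((θ ^ 2 * (1 - Q) - sin θ ^ 2) / (-Q)) * cos θ - θ * cos θ + sin θ) /
        (√((θ ^ 2 * (1 - Q) - sin θ ^ 2) / (-Q)) * sin θ ^ 2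
          + cos θ * (θ * cos θ - sin θ))))
      (nhdsWithin 0 (Set.Ioi 0)) (nhds (3 / 2)) := by
    have h := (hs.mul (((ht.mul hc).sub hc).add hs)).div
      ((ht.mul (hs.pow 2)).add (hc.mul hk)) (by norm_num)
    rw [show (1 * (1 * 1 - 1 + 1) / (1 * 1 ^ 2 + 1 * (-1 / 3)) : ℝ) = 3 / 2 by norm_num] at h
    refine h.congr' ?_
    filter_upwards [hpos] with θ hθ
    rw [Pi.div_apply]
    generalize √((θ ^ 2 * (1 - Q) - sin θ ^ 2) / (-Q)) = t
    have hn : sin θ / θ * (t / θ * cos θ - cos θ + sin θ / θ)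
        = (sin θ * (t * cos θ - θ * cos θ + sin θ)) / θ ^ 2 := by
      field_simp
    have hd : t / θ * (sin θ / θ) ^ 2 + cos θ * ((θ * cos θ - sin θ) / θ ^ 3)
        = (t * sin θ ^ 2 + cos θ * (θ * cos θ - sin θ)) / θ ^ 3 := by
      field_simp
    rw [hn, hd, div_div_div_eq, show θ ^ 3 = θ ^ 2 * θ by ring, mul_left_comm,
      mul_div_mul_left _ _ (pow_ne_zero 2 hθ.ne'), mul_comm _ θ, mul_div_assoc]
  have htop : Tendsto (fun θ : ℝ =>
      sin θ * (√((θ ^ 2 * (1 - Q) - sin θ ^ 2) / (-Q)) * cos θ - θ * cos θ + sin θ) /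
        (√((θ ^ 2 * (1 - Q) - sin θ ^ 2) / (-Q)) * sin θ ^ 2
          + cos θ * (θ * cos θ - sin θ)))
      (nhdsWithin 0 (Set.Ioi 0)) atTop := by
    refine (tendsto_inv_nhdsGT_zero.atTop_mul_pos (by norm_num) hmain).congr' ?_
    filter_upwards [hpos] with θ hθ
    exact inv_mul_cancel_left₀ hθ.ne' _
  exact ⟨htop, hmain, (tendsto_arctan_atTop.mono_right nhdsWithin_le_nhds).comp htop⟩
end

section
/- Fix Q < 0 and set t₀(θ) = √((θ²(1 − Q) − sin² θ)/(−Q)) for θ > 0. Define F(θ) = θ − π/2 + arctan( sin θ·(t₀(θ) cos θ − θ cos θ + sin θ) / ( t₀(θ) sin² θ + cos θ·(θ cos θ − sin θ) ) ). Then F(θ) → 0 as θ → 0⁺. -/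
open Real Filter

/-!
For `0 < θ < π / 2` one has `t₀ θ ≥ θ`, because `t₀² - θ² = (θ² - sin² θ) / (-Q) ≥ 0`. Hence the
numerator satisfies `N ≥ sin² θ`, and the denominator satisfies
`D ≥ θ sin² θ + θ cos² θ - sin θ cos θ = θ - sin (2θ) / 2 > 0`. Since `θ cos θ ≤ sin θ`, also
`D ≤ t₀ sin² θ`. Therefore `N / D ≥ 1 / t₀`, which tends to `+∞` as `θ → 0⁺` since `t₀ → 0⁺`;
so `arctan (N / D) → π / 2`.
-/

/-- For fixed `Q < 0`, with `t₀(θ) = √((θ²(1 − Q) − sin² θ)/(−Q))` and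
`F(θ) = θ − π/2 + arctan(N(θ)/D(θ))` where
`N(θ) = sin θ (t₀(θ) cos θ − θ cos θ + sin θ)` and
`D(θ) = t₀(θ) sin² θ + cos θ (θ cos θ − sin θ)`, one has `F(θ) → 0` as `θ → 0⁺`. -/
theorem involute_omega_limit_zero (Q : ℝ) (hQ : Q < 0)
    (t₀ F : ℝ → ℝ)
    (ht₀ : t₀ = fun θ =>
      Real.sqrt ((θ ^ 2 * (1 - Q) - Real.sin θ ^ 2) / (-Q)))
    (hF : F = fun θ => θ - π / 2 +
      Real.arctan
        (Real.sin θ * (t₀ θ * Real.cos θ - θ * Real.cos θ + Real.sin θ) /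
          (t₀ θ * Real.sin θ ^ 2 + Real.cos θ * (θ * Real.cos θ - Real.sin θ)))) :
    Tendsto F (nhdsWithin 0 (Set.Ioi 0)) (nhds 0) := by
  have hsmall : ∀ᶠ θ : ℝ in nhdsWithin 0 (Set.Ioi 0), 0 < θ ∧ θ < π / 2 :=
    Ioo_mem_nhdsGT (by positivity)
  have hle : ∀ θ : ℝ, 0 < θ → θ < π / 2 → θ ≤ t₀ θ := by
    intro θ h0 h1
    rw [ht₀]
    apply Real.le_sqrt_of_sq_le
    rw [le_div_iff₀ (by linarith)]
    have hs : Real.sin θ ^ 2 ≤ θ ^ 2 :=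
      pow_le_pow_left₀ (Real.sin_nonneg_of_nonneg_of_le_pi h0.le (by linarith))
        (Real.sin_le h0.le) 2
    linarith
  have hlim : Tendsto t₀ (nhdsWithin 0 (Set.Ioi 0)) (nhdsWithin 0 (Set.Ioi 0)) := by
    apply tendsto_nhdsWithin_of_tendsto_nhds_of_eventually_within
    · have hc : Continuous t₀ := by
        rw [ht₀]
        fun_prop
      have h := hc.tendsto 0
      have h0 : t₀ 0 = 0 := by simp [ht₀]
      rw [h0] at h
      exact h.mono_left nhdsWithin_le_nhds
    · filter_upwards [hsmall] with θ hθ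
      exact hθ.1.trans_le (hle θ hθ.1 hθ.2)
  have hratio : Tendsto (fun θ =>
      Real.sin θ * (t₀ θ * Real.cos θ - θ * Real.cos θ + Real.sin θ) /
        (t₀ θ * Real.sin θ ^ 2 + Real.cos θ * (θ * Real.cos θ - Real.sin θ)))
      (nhdsWithin 0 (Set.Ioi 0)) atTop := by
    refine tendsto_atTop_mono' _ ?_ (tendsto_inv_nhdsGT_zero.comp hlim)
    filter_upwards [hsmall] with θ ⟨h0, h1⟩
    have ht := hle θ h0 h1
    have hs : 0 < Real.sin θ := Real.sin_pos_of_pos_of_lt_pi h0 (by linarith)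
    have hc : 0 < Real.cos θ := Real.cos_pos_of_mem_Ioo ⟨by linarith, h1⟩
    have htan : θ * Real.cos θ ≤ Real.sin θ := by
      have h := Real.lt_tan h0 h1
      rw [Real.tan_eq_sin_div_cos, lt_div_iff₀ hc] at h
      exact h.le
    have htpos : 0 < t₀ θ := h0.trans_le ht
    have hN : Real.sin θ ^ 2 ≤
        Real.sin θ * (t₀ θ * Real.cos θ - θ * Real.cos θ + Real.sin θ) := by
      nlinarith [mul_nonneg hs.le (mul_nonneg (sub_nonneg.2 ht) hc.le)]
    have hD : 0 < t₀ θ * Real.sin θ ^ 2 + Real.cos θ * (θ * Real.cos θ - Real.sin θ) := by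
      have h2 := Real.sin_lt (show 0 < 2 * θ by linarith)
      rw [Real.sin_two_mul] at h2
      have h3 : θ * Real.sin θ ^ 2 + θ * Real.cos θ ^ 2 = θ := by
        rw [← mul_add, Real.sin_sq_add_cos_sq, mul_one]
      nlinarith [mul_le_mul_of_nonneg_right ht (sq_nonneg (Real.sin θ))]
    rw [Function.comp_apply, le_div_iff₀ hD, inv_mul_le_iff₀ htpos]
    nlinarith [mul_le_mul_of_nonneg_left hN htpos.le,
      mul_nonneg hc.le (sub_nonneg.2 htan)]
  have harctan := (Real.tendsto_arctan_atTop.mono_right nhdsWithin_le_nhds).comp hratio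
  have hid : Tendsto (fun θ : ℝ => θ - π / 2) (nhdsWithin 0 (Set.Ioi 0)) (nhds (0 - π / 2)) :=
    (tendsto_id.mono_left nhdsWithin_le_nhds).sub_const _
  have hsum := hid.add harctan
  rw [sub_add_cancel] at hsum
  rw [hF]
  exact hsum
end

section
/- For every real θ > 0 and every real q > 0, writing sinc θ = (sin θ)/θ, one has (sinc θ)² · ( sin² θ + 2·(sinc θ)·cos θ − 3 − q ) + 1 + q > 0. -/
open Real

/-!
Write `s = sin θ / θ` and `c = cos θ`. Since `sin² θ = 1 - c²`, the expression equals
`(1 - s²)² - s² (s - c)² + q (1 - s²) = (1 - s c) (1 + s c - 2 s²) + q (1 - s²)`.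
As `|s| < 1`, the last term is positive and `1 - s c > 0`, so it is enough that `1 + s c - 2 s² ≥ 0`.
With `x = 2 θ` this reads `x² + x sin x - 4 (1 - cos x) ≥ 0` (`quadratic_nonneg`); the left side
vanishes at `0` and has derivative `2 x + x cos x - 3 sin x`, which is nonnegative by the
Cusa–Huygens inequality (`cusa_huygens`).
-/

/-- The derivative of `2 x + x cos x - 3 sin x` is nonnegative on `(0, π)`: in terms of `h = x / 2`
it is `4 sin h (sin h - h cos h)`, and `h < tan h`. -/
lemma cusa_huygens_deriv_nonneg {x : ℝ} (h0 : 0 < x) (hpi : x < π) :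
    0 ≤ 2 - 2 * cos x - x * sin x := by
  obtain ⟨h, rfl⟩ : ∃ h, x = 2 * h := ⟨x / 2, by ring⟩
  have hh : 0 < h := by linarith
  have hc : 0 < cos h := cos_pos_of_mem_Ioo ⟨by linarith, by linarith⟩
  have hs : 0 < sin h := sin_pos_of_pos_of_lt_pi hh (by linarith)
  have ht : h < tan h := lt_tan hh (by linarith)
  rw [tan_eq_sin_div_cos, lt_div_iff₀ hc] at ht
  have e : 2 - 2 * cos (2 * h) - 2 * h * sin (2 * h) = 4 * (sin h * (sin h - h * cos h)) := by
    rw [cos_two_mul, sin_two_mul, cos_sq']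
    ring
  rw [e]
  have := mul_pos hs (sub_pos.2 ht)
  linarith

lemma cusa_huygens {x : ℝ} (hx : 0 ≤ x) : 0 ≤ 2 * x + x * cos x - 3 * sin x := by
  rcases le_or_gt x π with hpi | hpi
  · have hd : ∀ y : ℝ, HasDerivAt (fun x : ℝ => 2 * x + x * cos x - 3 * sin x)
        (2 - 2 * cos y - y * sin y) y := by
      intro y
      have := (((hasDerivAt_id y).const_mul 2).add
        ((hasDerivAt_id y).mul (hasDerivAt_cos y))).sub ((hasDerivAt_sin y).const_mul 3)
      refine this.congr_deriv ?_
      simp only [id]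
      ring
    have hm : MonotoneOn (fun x : ℝ => 2 * x + x * cos x - 3 * sin x) (Set.Icc 0 π) := by
      refine monotoneOn_of_hasDerivWithinAt_nonneg (convex_Icc 0 π)
        (fun y _ => (hd y).continuousAt.continuousWithinAt)
        (fun y _ => (hd y).hasDerivWithinAt) ?_
      intro y hy
      rw [interior_Icc] at hy
      exact cusa_huygens_deriv_nonneg hy.1 hy.2
    simpa using hm ⟨le_rfl, pi_pos.le⟩ ⟨hx, hpi⟩ hx
  · -- Here `x > 3`, so `2 x + x cos x ≥ x > 3 ≥ 3 sin x`.
    nlinarith [neg_one_le_cos x, sin_le_one x, pi_gt_three]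

lemma quadratic_nonneg {x : ℝ} (hx : 0 ≤ x) : 0 ≤ x ^ 2 + x * sin x + 4 * cos x - 4 := by
  have hd : ∀ y : ℝ, HasDerivAt (fun x : ℝ => x ^ 2 + x * sin x + 4 * cos x - 4)
      (2 * y + y * cos y - 3 * sin y) y := by
    intro y
    have := ((((hasDerivAt_id y).pow 2).add
      ((hasDerivAt_id y).mul (hasDerivAt_sin y))).add ((hasDerivAt_cos y).const_mul 4)).sub_const 4
    refine this.congr_deriv ?_
    simp only [id]
    push_cast
    ring
  have hm : MonotoneOn (fun x : ℝ => x ^ 2 + x * sin x + 4 * cos x - 4) (Set.Ici 0) := by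
    refine monotoneOn_of_hasDerivWithinAt_nonneg (convex_Ici 0)
      (fun y _ => (hd y).continuousAt.continuousWithinAt)
      (fun y _ => (hd y).hasDerivWithinAt) ?_
    intro y hy
    rw [interior_Ici] at hy
    exact cusa_huygens (le_of_lt hy)
  simpa using hm (Set.mem_Ici.2 le_rfl) (Set.mem_Ici.2 hx) hx

/-- For every `θ > 0` and `q > 0`, with `sinc θ = sin θ / θ`,
`(sinc θ)² (sin² θ + 2 sinc θ cos θ − 3 − q) + 1 + q > 0`. -/
theorem involute_derivative_factor_pos (θ q : ℝ) (hθ : 0 < θ) (hq : 0 < q) :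
    0 < (Real.sin θ / θ) ^ 2 *
          (Real.sin θ ^ 2 + 2 * (Real.sin θ / θ) * Real.cos θ - 3 - q)
        + 1 + q := by
  have hquad := quadratic_nonneg (x := 2 * θ) (by linarith)
  rw [sin_two_mul, cos_two_mul, cos_sq'] at hquad
  have hsθ : sin θ ^ 2 < θ ^ 2 := sin_sq_lt_sq hθ.ne'
  rw [sin_sq]
  obtain ⟨s, hs⟩ : ∃ s, s = sin θ / θ := ⟨_, rfl⟩
  have hsin : sin θ = s * θ := by rw [hs]; field_simp
  rw [← hs]
  rw [hsin] at hquad hsθ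
  have hθ2 : 0 < θ ^ 2 := by positivity
  have hs1 : s ^ 2 < 1 := by
    by_contra! h
    nlinarith
  have hA : 0 ≤ 1 + s * cos θ - 2 * s ^ 2 := by
    by_contra! h
    nlinarith
  have hB : 0 < 1 - s * cos θ := by
    nlinarith [sq_nonneg (s - cos θ), cos_sq_le_one θ]
  have e : s ^ 2 * (1 - cos θ ^ 2 + 2 * s * cos θ - 3 - q) + 1 + q
      = (1 - s * cos θ) * (1 + s * cos θ - 2 * s ^ 2) + q * (1 - s ^ 2) := by ring
  rw [e]
  have h1 := mul_nonneg hB.le hA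
  have h2 := mul_pos hq (sub_pos.2 hs1)
  linarith
end

section
/- Fix Q < 0 and set t₀(θ) = √((θ²(1 − Q) − sin² θ)/(−Q)) for θ > 0. Define F(θ) = θ − π/2 + arctan( sin θ·(t₀(θ) cos θ − θ cos θ + sin θ) / ( t₀(θ) sin² θ + cos θ·(θ cos θ − sin θ) ) ). Then F is continuous and strictly monotonically increasing on (0, ∞). -/
/-!
Write `s = sin θ`, `c = cos θ`, `T = t₀ θ`. The pair `(D, N)` satisfies
`D + i N = e^{-iθ} ((θ c - s) + i T s)`, so up to the constant `-π/2` the function `F` is a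
continuous argument of the planar curve `(X, Y) = (θ c - s, T s)`. Hence `F'` has the sign of
`X Y' - Y X'`. With `q = -Q` one has `T² = θ² + (θ² - s²)/q` and `T T' = θ + (θ - s c)/q`, and these
give
`T (X Y' - Y X') = θ (θ² - s²) + (θ - s c) (θ² + θ s c - 2 s²) / q`.
The first summand is positive because `|s| < θ`, and `θ - s c > 0` because `2 s c = sin (2θ) < 2θ`.
The factor `θ² + θ s c - 2 s²` is a quarter of `u² + u sin u - 4 + 4 cos u` at `u = 2θ`, a function
vanishing at `0` whose derivative `u (2 + cos u) - 3 sin u` is nonnegative by the Cusa–Huygens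
inequality (`involute_cusa`).
The bound `D ≥ θ - s c > 0`, from `T > θ`, makes the quotient `N / D` differentiable.
-/

open Real

theorem involute_nonneg_of_deriv {f f' : ℝ → ℝ} (hf : ∀ x, HasDerivAt f (f' x) x)
    (h0 : f 0 = 0) {b : ℝ} (hf' : ∀ x, 0 < x → x < b → 0 ≤ f' x) {x : ℝ} (hx : 0 ≤ x)
    (hxb : x ≤ b) : 0 ≤ f x := by
  have hm : MonotoneOn f (Set.Icc 0 b) := by
    apply monotoneOn_of_deriv_nonneg (convex_Icc 0 b)
    · exact fun y _ => (hf y).continuousAt.continuousWithinAt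
    · exact fun y _ => (hf y).differentiableAt.differentiableWithinAt
    · intro y hy
      rw [interior_Icc] at hy
      rw [(hf y).deriv]
      exact hf' y hy.1 hy.2
  have := hm ⟨le_refl 0, hx.trans hxb⟩ ⟨hx, hxb⟩ hx
  rwa [h0] at this

/-- The Cusa–Huygens inequality `sin u / u ≤ (2 + cos u) / 3`. On `[0, π]` it follows by
integrating `0 ≤ u sin u` three times; beyond `π` it is trivial since `2 + cos u ≥ 1`. -/
theorem involute_cusa {u : ℝ} (hu : 0 ≤ u) : 0 ≤ u * (2 + cos u) - 3 * sin u := by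
  rcases le_total u π with h | h
  · have h1 : ∀ x, 0 < x → x < π → 0 ≤ sin x - x * cos x := by
      intro x hx hxp
      refine involute_nonneg_of_deriv (f := fun x => sin x - x * cos x)
        (f' := fun x => x * sin x) (b := π) ?_ (by simp) ?_ hx.le hxp.le
      · intro y
        have := (hasDerivAt_sin y).sub ((hasDerivAt_id y).mul (hasDerivAt_cos y))
        refine this.congr_deriv ?_
        simp only [id]
        ring
      · intro y hy hyp
        exact mul_nonneg hy.le (sin_nonneg_of_nonneg_of_le_pi hy.le hyp.le)
    have h2 : ∀ x, 0 < x → x < π → 0 ≤ 2 - 2 * cos x - x * sin x := by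
      intro x hx hxp
      refine involute_nonneg_of_deriv (f := fun x => 2 - 2 * cos x - x * sin x)
        (f' := fun x => sin x - x * cos x) (b := π) ?_ (by simp) h1 hx.le hxp.le
      intro y
      have := (((hasDerivAt_cos y).const_mul 2).const_sub 2).sub
        ((hasDerivAt_id y).mul (hasDerivAt_sin y))
      refine this.congr_deriv ?_
      simp only [id]
      ring
    refine involute_nonneg_of_deriv (f := fun x => x * (2 + cos x) - 3 * sin x)
      (f' := fun x => 2 - 2 * cos x - x * sin x) (b := π) ?_ (by simp) h2 hu h
    intro y
    have := ((hasDerivAt_id y).mul ((hasDerivAt_cos y).const_add 2)).sub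
      ((hasDerivAt_sin y).const_mul 3)
    refine this.congr_deriv ?_
    simp only [id]
    ring
  · nlinarith [pi_gt_three, neg_one_le_cos u, sin_le_one u]

theorem involute_key {θ : ℝ} (hθ : 0 ≤ θ) :
    0 ≤ θ ^ 2 + θ * (sin θ * cos θ) - 2 * sin θ ^ 2 := by
  have h : 0 ≤ (2 * θ) ^ 2 + (2 * θ) * sin (2 * θ) - 4 + 4 * cos (2 * θ) := by
    refine involute_nonneg_of_deriv (f := fun x => x ^ 2 + x * sin x - 4 + 4 * cos x)
      (f' := fun x => x * (2 + cos x) - 3 * sin x) (b := 2 * θ) ?_ (by simp)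
      (fun x hx _ => involute_cusa hx.le) (by linarith) le_rfl
    intro y
    have := ((((hasDerivAt_id y).pow 2).add ((hasDerivAt_id y).mul (hasDerivAt_sin y))).sub_const
      4).add ((hasDerivAt_cos y).const_mul 4)
    refine this.congr_deriv ?_
    simp only [id]
    push_cast
    ring
  rw [sin_two_mul, cos_two_mul] at h
  nlinarith [sin_sq_add_cos_sq θ]

/-- The sign computation for `F'`, with `T`, `T'` standing for `t₀ θ`, `t₀' θ`. The left
side of the conclusion is `X Y' - Y X'` for `(X, Y) = (θ c - s, T s)`. -/
theorem involute_wronskian_pos {q θ T T' : ℝ} (hq : 0 < q) (hθ : 0 < θ) (hT : 0 < T)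
    (hT2 : T ^ 2 = θ ^ 2 + (θ ^ 2 - sin θ ^ 2) / q)
    (hTT' : T * T' = θ + (θ - sin θ * cos θ) / q) :
    0 < (θ * cos θ - sin θ) * (T' * sin θ + T * cos θ) + T * sin θ * (θ * sin θ) := by
  have hs : 0 < θ ^ 2 - sin θ ^ 2 := by
    have := sin_sq_lt_sq hθ.ne'
    linarith
  have hsc : 0 < θ - sin θ * cos θ := by
    have := sin_lt (show 0 < 2 * θ by linarith)
    rw [sin_two_mul] at this
    linarith
  have e : T * ((θ * cos θ - sin θ) * (T' * sin θ + T * cos θ) + T * sin θ * (θ * sin θ))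
      = θ * (θ ^ 2 - sin θ ^ 2) + (θ - sin θ * cos θ) *
        (θ ^ 2 + θ * (sin θ * cos θ) - 2 * sin θ ^ 2) / q := by
    have e1 : T * ((θ * cos θ - sin θ) * (T' * sin θ + T * cos θ) + T * sin θ * (θ * sin θ))
        = (θ * cos θ - sin θ) * sin θ * (T * T')
          + T ^ 2 * (θ * (sin θ ^ 2 + cos θ ^ 2) - sin θ * cos θ) := by ring
    rw [e1, hT2, hTT', sin_sq_add_cos_sq]
    field_simp
    ring
  have hpos : 0 < T * ((θ * cos θ - sin θ) * (T' * sin θ + T * cos θ)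
      + T * sin θ * (θ * sin θ)) := by
    rw [e]
    have := involute_key hθ.le
    positivity
  exact pos_of_mul_pos_right hpos hT.le

/-- For fixed `Q < 0`, with `t₀(θ) = √((θ²(1 − Q) − sin² θ)/(−Q))` and
`F(θ) = θ − π/2 + arctan(N(θ)/D(θ))` where
`N(θ) = sin θ (t₀(θ) cos θ − θ cos θ + sin θ)` and
`D(θ) = t₀(θ) sin² θ + cos θ (θ cos θ − sin θ)`, the function `F` is continuous
and strictly monotonically increasing on `(0, ∞)`. -/
theorem involute_omega_strictMono (Q : ℝ) (hQ : Q < 0)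
    (t₀ F : ℝ → ℝ)
    (ht₀ : t₀ = fun θ =>
      Real.sqrt ((θ ^ 2 * (1 - Q) - Real.sin θ ^ 2) / (-Q)))
    (hF : F = fun θ => θ - π / 2 +
      Real.arctan
        (Real.sin θ * (t₀ θ * Real.cos θ - θ * Real.cos θ + Real.sin θ) /
          (t₀ θ * Real.sin θ ^ 2 + Real.cos θ * (θ * Real.cos θ - Real.sin θ)))) :
    ContinuousOn F (Set.Ioi 0) ∧ StrictMonoOn F (Set.Ioi 0) := by
  have main : ∀ θ, 0 < θ → ∃ d, 0 < d ∧ HasDerivAt F d θ := by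
    intro θ hθ
    have hq : 0 < -Q := by linarith
    have hQ0 : Q ≠ 0 := hQ.ne
    have hs : 0 < θ ^ 2 - sin θ ^ 2 := by
      have := sin_sq_lt_sq hθ.ne'
      linarith
    have hrad : (θ ^ 2 * (1 - Q) - sin θ ^ 2) / (-Q)
        = θ ^ 2 + (θ ^ 2 - sin θ ^ 2) / (-Q) := by
      field_simp
      ring
    have hrad_pos : 0 < (θ ^ 2 * (1 - Q) - sin θ ^ 2) / (-Q) := by
      rw [hrad]
      positivity
    have hT2 : t₀ θ ^ 2 = θ ^ 2 + (θ ^ 2 - sin θ ^ 2) / (-Q) := by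
      rw [← hrad, ht₀]
      exact sq_sqrt hrad_pos.le
    have hT : 0 < t₀ θ := by
      rw [ht₀]
      exact sqrt_pos.mpr hrad_pos
    have hTθ : θ < t₀ θ := by
      have : 0 < (θ ^ 2 - sin θ ^ 2) / (-Q) := by positivity
      exact lt_of_pow_lt_pow_left₀ 2 hT.le (by linarith)
    obtain ⟨T', hT', hTT'⟩ : ∃ T', HasDerivAt t₀ T' θ ∧
        t₀ θ * T' = θ + (θ - sin θ * cos θ) / (-Q) := by
      have h1 : HasDerivAt (fun θ => (θ ^ 2 * (1 - Q) - sin θ ^ 2) / (-Q))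
          ((2 * θ * (1 - Q) - 2 * sin θ * cos θ) / (-Q)) θ := by
        have := ((((hasDerivAt_id θ).pow 2).mul_const (1 - Q)).sub
          ((hasDerivAt_sin θ).pow 2)).div_const (-Q)
        refine this.congr_deriv ?_
        simp
      have h2 := h1.sqrt hrad_pos.ne'
      have h3 : √((θ ^ 2 * (1 - Q) - sin θ ^ 2) / (-Q)) = t₀ θ := by rw [ht₀]
      rw [← ht₀, h3] at h2
      refine ⟨_, h2, ?_⟩
      field_simp
      ring
    have hD : 0 < t₀ θ * sin θ ^ 2 + cos θ * (θ * cos θ - sin θ) := by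
      have hsc := sin_lt (show 0 < 2 * θ by linarith)
      rw [sin_two_mul] at hsc
      nlinarith [sin_sq_add_cos_sq θ, mul_nonneg (sub_pos.mpr hTθ).le (sq_nonneg (sin θ))]
    have hW := involute_wronskian_pos hq hθ hT hT2 hTT'
    have hs' := hasDerivAt_sin θ
    have hc' := hasDerivAt_cos θ
    have hid := hasDerivAt_id' θ
    have hN' := hs'.fun_mul (((hT'.fun_mul hc').fun_sub (hid.fun_mul hc')).fun_add hs')
    have hD' := (hT'.fun_mul (hs'.fun_pow 2)).fun_add
      (hc'.fun_mul ((hid.fun_mul hc').fun_sub hs'))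
    have hF' := (hid.sub_const (π / 2)).fun_add ((hN'.fun_div hD' hD.ne').arctan)
    rw [← hF] at hF'
    refine ⟨_, ?_, hF'⟩
    have harctan : ∀ N D A : ℝ, 0 < D → 0 < N ^ 2 + D ^ 2 + A →
        0 < 1 + 1 / (1 + (N / D) ^ 2) * (A / D ^ 2) := by
      intro N D A hD h
      have e : 1 + 1 / (1 + (N / D) ^ 2) * (A / D ^ 2) = (N ^ 2 + D ^ 2 + A) / (N ^ 2 + D ^ 2) := by
        have : D ^ 2 + N ^ 2 ≠ 0 := by positivity
        have : N ^ 2 + D ^ 2 ≠ 0 := by positivity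
        field_simp
        ring
      rw [e]
      positivity
    apply harctan _ _ _ hD
    -- Since `D = c X + s Y` and `N = c Y - s X`, the quantity `N² + D² + N' D - N D'` equals
    -- `(s² + c²) (X Y' - Y X')`.
    refine hW.trans_eq ?_
    push_cast
    linear_combination
      (-((θ * cos θ - sin θ) * (T' * sin θ + t₀ θ * cos θ) + t₀ θ * sin θ * (θ * sin θ)))
        * sin_sq_add_cos_sq θ
  refine ⟨fun θ hθ => ?_, ?_⟩
  · obtain ⟨d, -, hd⟩ := main θ hθ
    exact hd.continuousAt.continuousWithinAt
  · apply strictMonoOn_of_deriv_pos (convex_Ioi 0)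
    · intro θ hθ
      obtain ⟨d, -, hd⟩ := main θ hθ
      exact hd.continuousAt.continuousWithinAt
    · intro θ hθ
      rw [interior_Ioi] at hθ
      obtain ⟨d, hd0, hd⟩ := main θ hθ
      rwa [hd.deriv]
end

section
/- Fix Q < 0 and set t₀(θ) = √((θ²(1 − Q) − sin² θ)/(−Q)) for θ > 0, and F(θ) = θ − π/2 + arctan( sin θ·(t₀(θ) cos θ − θ cos θ + sin θ) / ( t₀(θ) sin² θ + cos θ·(θ cos θ − sin θ) ) ). Then for every ω > 0 there exists a unique θ > 0 with F(θ) = ω. (Hence for any admissible pair of invariants Q < 0, ω > 0 there is a unique arc of the reflected unit involute realizing them.) -/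
/-!
Write `s = sin θ`, `c = cos θ`, `T = t₀(θ)`, and
`N`, `D` for the numerator and denominator inside the arctangent. For `θ > 0` one has `θ < T`, hence
`D = (T - θ) s² + (θ - s c) > 0` and `F` is differentiable on `(0, ∞)`. Modulo `s² + c² = 1`,
`D² + N² + N' D - N D' = T (θ - s c) + T' s (θ c - s)`, and after multiplication by `-Q T` this is
`-Q θ (θ² - s²) + (θ - s c) (θ² + θ s c - 2 s²)`. Both summands are positive, the second one by
`two_sin_sq_lt`, so `F' > 0` and `F` is strictly increasing; this is `involute_deriv_pos`.

Existence needs no limit: `-π/2 < arctan < π/2` gives `θ - π < F θ < θ`, so the value `ω` is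
attained between `ω` and `ω + π`.
-/

open Real

lemma sin_mul_cos_lt {x : ℝ} (hx : 0 < x) : sin x * cos x < x := by
  have h := sin_lt (by linarith : 0 < 2 * x)
  rw [sin_two_mul] at h
  linarith

/-- Equivalent to the Cusa–Huygens inequality `3 sin y < y (2 + cos y)` at `y = 2 x`. -/
lemma cusa_aux {x : ℝ} (hx : 0 < x) :
    0 < 3 * x - 3 * (sin x * cos x) - 2 * x * sin x ^ 2 := by
  rcases lt_or_ge x (π / 2) with h | h
  · have hd : ∀ y : ℝ, HasDerivAt (fun y => 3 * y - 3 * (sin y * cos y) - 2 * y * sin y ^ 2)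
        (4 * sin y * (sin y - y * cos y)) y := by
      intro y
      have h1 := (((hasDerivAt_id' y).const_mul 3).sub
        (((hasDerivAt_sin y).mul (hasDerivAt_cos y)).const_mul 3)).sub
        (((hasDerivAt_id' y).const_mul 2).mul ((hasDerivAt_sin y).pow 2))
      refine h1.congr_deriv ?_
      simp only [Pi.pow_apply]
      have := sin_sq_add_cos_sq y
      push_cast
      linear_combination (-3) * this
    have hm := strictMonoOn_of_deriv_pos (convex_Icc 0 (π / 2))
      (fun y _ => (hd y).continuousAt.continuousWithinAt) (by
        intro y hy
        rw [interior_Icc] at hy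
        rw [(hd y).deriv]
        have hs : 0 < sin y := sin_pos_of_pos_of_lt_pi hy.1 (by linarith [hy.2, pi_pos])
        have hc : 0 < cos y := cos_pos_of_mem_Ioo ⟨by linarith [hy.1, pi_pos], hy.2⟩
        have ht := lt_tan hy.1 hy.2
        rw [tan_eq_sin_div_cos, lt_div_iff₀ hc] at ht
        have : 0 < sin y - y * cos y := by linarith
        positivity)
    have := hm ⟨le_rfl, by positivity⟩ ⟨hx.le, h.le⟩ hx
    simpa using this
  · have h3 := pi_gt_three
    have h1 := sin_sq_add_cos_sq x
    nlinarith [sq_nonneg (sin x - cos x), mul_nonneg hx.le (sq_nonneg (cos x))]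

lemma two_sin_sq_lt {x : ℝ} (hx : 0 < x) :
    0 < x ^ 2 + x * (sin x * cos x) - 2 * sin x ^ 2 := by
  have hd : ∀ y : ℝ, HasDerivAt (fun y => y ^ 2 + y * (sin y * cos y) - 2 * sin y ^ 2)
      (3 * y - 3 * (sin y * cos y) - 2 * y * sin y ^ 2) y := by
    intro y
    have h1 := (((hasDerivAt_id' y).pow 2).add ((hasDerivAt_id' y).mul
      ((hasDerivAt_sin y).mul (hasDerivAt_cos y)))).sub (((hasDerivAt_sin y).pow 2).const_mul 2)
    refine h1.congr_deriv ?_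
    simp only [Pi.mul_apply]
    have := sin_sq_add_cos_sq y
    push_cast
    linear_combination y * this
  have hm := strictMonoOn_of_deriv_pos (convex_Ici 0)
    (fun y _ => (hd y).continuousAt.continuousWithinAt) (by
      intro y hy
      rw [interior_Ici] at hy
      rw [(hd y).deriv]
      exact cusa_aux hy)
  have := hm (Set.mem_Ici.2 le_rfl) (Set.mem_Ici.2 hx.le) hx
  simpa using this

lemma involute_deriv_pos (Q : ℝ) (hQ : Q < 0) (t₀ F : ℝ → ℝ)
    (ht₀ : t₀ = fun θ => √((θ ^ 2 * (1 - Q) - sin θ ^ 2) / (-Q)))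
    (hF : F = fun θ => θ - π / 2 +
      arctan (sin θ * (t₀ θ * cos θ - θ * cos θ + sin θ) /
          (t₀ θ * sin θ ^ 2 + cos θ * (θ * cos θ - sin θ))))
    {x : ℝ} (hx : 0 < x) : ∃ F' : ℝ, HasDerivAt F F' x ∧ 0 < F' := by
  have hq : 0 < -Q := by linarith
  have hQ0 : Q ≠ 0 := hQ.ne
  have hsx : sin x ^ 2 < x ^ 2 := sin_sq_lt_sq hx.ne'
  have hg : x ^ 2 < (x ^ 2 * (1 - Q) - sin x ^ 2) / (-Q) := by
    rw [lt_div_iff₀ hq]; linarith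
  have hg0 := (sq_nonneg x).trans_lt hg
  have hT : x < t₀ x := by
    rw [ht₀]; exact (lt_sqrt hx.le).2 hg
  have hT0 : 0 < t₀ x := hx.trans hT
  have hT2 : t₀ x ^ 2 * (-Q) = x ^ 2 * (1 - Q) - sin x ^ 2 := by
    rw [ht₀]; simp only
    rw [sq_sqrt hg0.le, div_mul_cancel₀ _ hq.ne']
  obtain ⟨T', hdT, hTT'⟩ : ∃ T', HasDerivAt t₀ T' x ∧
      t₀ x * T' * (-Q) = x * (1 - Q) - sin x * cos x := by
    have h1 := (((((hasDerivAt_id' x).pow 2).mul_const (1 - Q)).sub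
      ((hasDerivAt_sin x).pow 2)).div_const (-Q)).sqrt hg0.ne'
    refine ⟨_, ht₀ ▸ h1, ?_⟩
    have h2 : √((x ^ 2 * (1 - Q) - sin x ^ 2) / (-Q)) = t₀ x := by rw [ht₀]
    simp only [Pi.sub_apply, Pi.pow_apply]
    rw [h2]
    push_cast
    field_simp
  have hsc := sin_mul_cos_lt hx
  have hcs := sin_sq_add_cos_sq x
  have hD : 0 < t₀ x * sin x ^ 2 + cos x * (x * cos x - sin x) := by
    nlinarith [mul_nonneg (sub_nonneg.2 hT.le) (sq_nonneg (sin x))]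
  have hdN : HasDerivAt (fun θ => sin θ * (t₀ θ * cos θ - θ * cos θ + sin θ))
      (cos x * (t₀ x * cos x - x * cos x + sin x) +
        sin x * (T' * cos x - t₀ x * sin x - (cos x - x * sin x) + cos x)) x := by
    refine ((hasDerivAt_sin x).mul (((hdT.mul (hasDerivAt_cos x)).sub
      ((hasDerivAt_id' x).mul (hasDerivAt_cos x))).add (hasDerivAt_sin x))).congr_deriv ?_
    simp only [Pi.add_apply, Pi.sub_apply, Pi.mul_apply]
    ring
  have hdD : HasDerivAt (fun θ => t₀ θ * sin θ ^ 2 + cos θ * (θ * cos θ - sin θ))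
      (T' * sin x ^ 2 + 2 * t₀ x * sin x * cos x - sin x * (x * cos x - sin x)
        - cos x * (x * sin x)) x := by
    refine ((hdT.mul ((hasDerivAt_sin x).pow 2)).add ((hasDerivAt_cos x).mul
      (((hasDerivAt_id' x).mul (hasDerivAt_cos x)).sub (hasDerivAt_sin x)))).congr_deriv ?_
    simp only [Pi.sub_apply, Pi.mul_apply, Pi.pow_apply]
    push_cast
    ring
  have hd := ((hasDerivAt_id' x).sub_const (π / 2)).add (hdN.div hdD hD.ne').arctan
  refine ⟨_, by rw [hF]; exact hd, ?_⟩
  simp only [Pi.div_apply]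
  set N' := cos x * (t₀ x * cos x - x * cos x + sin x) +
        sin x * (T' * cos x - t₀ x * sin x - (cos x - x * sin x) + cos x) with hN'
  set D' := T' * sin x ^ 2 + 2 * t₀ x * sin x * cos x - sin x * (x * cos x - sin x)
        - cos x * (x * sin x) with hD'
  set N := sin x * (t₀ x * cos x - x * cos x + sin x) with hN
  set D := t₀ x * sin x ^ 2 + cos x * (x * cos x - sin x) with hDdef
  have hG : D ^ 2 + N ^ 2 + N' * D - N * D' =
      t₀ x * (x - sin x * cos x) + T' * sin x * (x * cos x - sin x) := by
    have hc4 : cos x ^ 2 = 1 - sin x ^ 2 := by linarith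
    have hc3 : cos x ^ 3 = cos x * (1 - sin x ^ 2) := by rw [← hc4]; ring
    have hc4' : cos x ^ 4 = (1 - sin x ^ 2) ^ 2 := by rw [← hc4]; ring
    rw [hN', hD', hN, hDdef]
    ring_nf
    simp only [hc4, hc3, hc4']
    ring
  have hGpos : 0 < D ^ 2 + N ^ 2 + N' * D - N * D' := by
    have key : (-Q * t₀ x) * (D ^ 2 + N ^ 2 + N' * D - N * D') =
        -Q * (x * (x ^ 2 - sin x ^ 2)) + (x - sin x * cos x) *
          (x ^ 2 + x * (sin x * cos x) - 2 * sin x ^ 2) := by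
      rw [hG]
      linear_combination (x - sin x * cos x) * hT2 + sin x * (x * cos x - sin x) * hTT'
    have h1 : 0 < -Q * (x * (x ^ 2 - sin x ^ 2)) :=
      mul_pos hq (mul_pos hx (sub_pos.2 hsx))
    have h2 := mul_pos (sub_pos.2 hsc) (two_sin_sq_lt hx)
    exact pos_of_mul_pos_right (by rw [key]; linarith) (mul_pos hq hT0).le
  have hfin : 1 + 1 / (1 + (N / D) ^ 2) * ((N' * D - N * D') / D ^ 2) =
      (D ^ 2 + N ^ 2 + N' * D - N * D') / (D ^ 2 + N ^ 2) := by
    have : D ^ 2 + N ^ 2 ≠ 0 := by positivity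
    field_simp
    ring
  rw [hfin]
  positivity

/-- For fixed `Q < 0`, with `t₀(θ) = √((θ²(1 − Q) − sin² θ)/(−Q))` and
`F(θ) = θ − π/2 + arctan(N(θ)/D(θ))`, for every `ω > 0` there is a unique
`θ > 0` with `F(θ) = ω`: a unique arc of the reflected unit involute realizes the
invariants `Q` and `ω`. -/
theorem involute_omega_exists_unique (Q : ℝ) (hQ : Q < 0)
    (t₀ F : ℝ → ℝ)
    (ht₀ : t₀ = fun θ =>
      Real.sqrt ((θ ^ 2 * (1 - Q) - Real.sin θ ^ 2) / (-Q)))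
    (hF : F = fun θ => θ - π / 2 +
      Real.arctan
        (Real.sin θ * (t₀ θ * Real.cos θ - θ * Real.cos θ + Real.sin θ) /
          (t₀ θ * Real.sin θ ^ 2 + Real.cos θ * (θ * Real.cos θ - Real.sin θ)))) :
    ∀ ω : ℝ, 0 < ω → ∃! θ : ℝ, 0 < θ ∧ F θ = ω := by
  have hder : ∀ x : ℝ, 0 < x → ∃ F' : ℝ, HasDerivAt F F' x ∧ 0 < F' :=
    fun x hx => involute_deriv_pos Q hQ t₀ F ht₀ hF hx
  have hcont : ContinuousOn F (Set.Ioi 0) := fun x hx => by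
    obtain ⟨_, h, _⟩ := hder x hx
    exact h.continuousAt.continuousWithinAt
  have hmono : StrictMonoOn F (Set.Ioi 0) :=
    strictMonoOn_of_deriv_pos (convex_Ioi 0) hcont (fun x hx => by
      rw [interior_Ioi] at hx
      obtain ⟨_, h, hpos⟩ := hder x hx
      rwa [h.deriv])
  have hlt : ∀ x, F x < x := fun x => by
    rw [hF]; simp only
    linarith [arctan_lt_pi_div_two (sin x * (t₀ x * cos x - x * cos x + sin x) /
      (t₀ x * sin x ^ 2 + cos x * (x * cos x - sin x)))]
  have hgt : ∀ x, x - π < F x := fun x => by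
    rw [hF]; simp only
    linarith [neg_pi_div_two_lt_arctan (sin x * (t₀ x * cos x - x * cos x + sin x) /
      (t₀ x * sin x ^ 2 + cos x * (x * cos x - sin x)))]
  intro ω hω
  obtain ⟨θ, hθ, hFθ⟩ := intermediate_value_Icc (by linarith [pi_pos] : ω ≤ ω + π)
    (hcont.mono fun y hy => hω.trans_le hy.1)
    ⟨(hlt ω).le, by linarith [hgt (ω + π)]⟩
  have hθ0 : 0 < θ := hω.trans_le hθ.1
  exact ⟨θ, ⟨hθ0, hFθ⟩, fun y hy => hmono.injOn hy.1 hθ0 (hy.2.trans hFθ.symm)⟩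
end

section
/- Let T > 0 and for s > 0 with 2e^{−s/T} − 1 ∈ (−1, 1) define τ(s) = √(e^{s/T} − 1) − arccos(2 e^{−s/T} − 1) + π. Then τ is differentiable and its derivative equals τ'(s) = (1 − 2 e^{−s/T}) / ( T √(1 − (1 − 2 e^{−s/T})²) ). (Thus the polar tractrix has natural equation k(s) = (1 − 2e^{−s/T}) / (T √(1 − (1 − 2e^{−s/T})²)), the curvature being the derivative of the tangent slope angle with respect to arc length.) -/
open Real

/-!
Write `x = e^{-s/T}`, so that `0 < x < 1` and `e^{s/T} = x⁻¹`. The radicands in the derivative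
of the arccosine and in the claimed formula are the same, and
`1 - (1 - 2x)² = 4x(1 - x) = (2x)² (x⁻¹ - 1)`; hence every square root is a multiple of
`q = √(x⁻¹ - 1) > 0`. The chain rule gives `τ' = x⁻¹ / (2Tq) - 1 / (Tq)`, which equals
`(1 - 2x) / (2Txq)`.
-/

/-- For the polar tractrix with leash length `T > 0`, the tangent slope angle
`τ(s) = √(e^{s/T} − 1) − arccos(2e^{−s/T} − 1) + π` is differentiable with
`τ'(s) = (1 − 2e^{−s/T}) / (T √(1 − (1 − 2e^{−s/T})²))`; this derivative is the
curvature `k(s)` in the natural equation of the tractrix. -/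
theorem tractrix_natural_equation (T : ℝ) (hT : 0 < T)
    (τ : ℝ → ℝ)
    (hτ : τ = fun s =>
      Real.sqrt (Real.exp (s / T) - 1)
        - Real.arccos (2 * Real.exp (-s / T) - 1) + π) :
    ∀ s : ℝ, 0 < s →
      2 * Real.exp (-s / T) - 1 ∈ Set.Ioo (-1 : ℝ) 1 →
      HasDerivAt τ
        ((1 - 2 * Real.exp (-s / T)) /
          (T * Real.sqrt (1 - (1 - 2 * Real.exp (-s / T)) ^ 2))) s := by
  intro s hs hy
  obtain ⟨hy1, hy2⟩ := hy
  set x := Real.exp (-s / T) with hx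
  have hx0 : 0 < x := Real.exp_pos _
  have hE : Real.exp (s / T) = x⁻¹ := by
    rw [hx, ← Real.exp_neg]; congr 1; ring
  have hE1 : 0 < x⁻¹ - 1 := by
    have := (one_lt_inv₀ hx0).2 (by linarith : x < 1)
    linarith
  have hq0 : 0 < √(x⁻¹ - 1) := Real.sqrt_pos.2 hE1
  have hr : √(1 - (1 - 2 * x) ^ 2) = 2 * x * √(x⁻¹ - 1) := by
    have h : 1 - (1 - 2 * x) ^ 2 = (2 * x) ^ 2 * (x⁻¹ - 1) := by
      field_simp; ring
    rw [h, Real.sqrt_mul (sq_nonneg _), Real.sqrt_sq (by positivity)]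
  have hr' : √(1 - (2 * x - 1) ^ 2) = 2 * x * √(x⁻¹ - 1) := by
    rw [← hr]; congr 1; ring
  have d1 : HasDerivAt (fun s => √(Real.exp (s / T) - 1))
      (x⁻¹ * (1 / T) / (2 * √(x⁻¹ - 1))) s := by
    have h := (((hasDerivAt_id' s).div_const T).exp.sub_const 1).sqrt
      (by rw [hE]; exact hE1.ne')
    rwa [hE] at h
  have d2 : HasDerivAt (fun s => 2 * Real.exp (-s / T) - 1) (2 * (x * (-1 / T))) s :=
    ((((hasDerivAt_id' s).neg).div_const T).exp.const_mul 2).sub_const 1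
  have d3 : HasDerivAt (fun s => Real.arccos (2 * Real.exp (-s / T) - 1))
      (-(1 / √(1 - (2 * x - 1) ^ 2)) * (2 * (x * (-1 / T)))) s :=
    HasDerivAt.comp (h₂ := Real.arccos) s
      (Real.hasDerivAt_arccos (x := 2 * x - 1) hy1.ne' hy2.ne) d2
  rw [hτ]
  refine ((d1.sub d3).add_const π).congr_deriv ?_
  rw [hr, hr']
  field_simp
end
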